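/- Let A be a *-algebra and let f, g be representable positive functionals on A. Then there exists a representable positive functional f_r on A such that: f_r ≤ f, f_r is absolutely continuous with respect to g, and f_r is the greatest among all representable positive functionals f₀ on A with f₀ ≤ f and f₀ absolutely continuous with respect to g. Moreover, the positive functional f_s := f − f_r is representable, f_s and g are singular, and f_s and f_r are singular. (Lebesgue decomposition of f with respect to g.) -/

import Mathlib

open scoped ComplexOrder InnerProductSpace

section StarAlgebraDefs

variable {A : Type} [NonUnitalRing A] [Module ℂ A] [SMulCommClass ℂ A A]
  [IsScalarTower ℂ A A] [StarRing A] [StarModule ℂ A]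

/-- A linear functional on a `⋆`-algebra is positive if `0 ≤ f (a⋆ * a)` for every `a`. -/
def IsPosFn (f : A →ₗ[ℂ] ℂ) : Prop := ∀ a : A, 0 ≤ f (star a * a)

/-- Order on positive functionals: `f ≤ g` iff `g - f` is positive. -/
def FnLE (f g : A →ₗ[ℂ] ℂ) : Prop := IsPosFn (g - f)

/-- `f` is induced by a `⋆`-representation on the Hilbert space `H` with a cyclic vector. -/
def IsRepOn (f : A →ₗ[ℂ] ℂ) (H : Type) [NormedAddCommGroup H]
    [InnerProductSpace ℂ H] [CompleteSpace H] : Prop :=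
  ∃ (π : A →⋆ₙₐ[ℂ] (H →L[ℂ] H)) (ξ : H),
    DenseRange (fun a : A => π a ξ) ∧ ∀ a : A, f a = ⟪ξ, π a ξ⟫_ℂ

/-- A positive linear functional is representable if it is induced by a cyclic
`⋆`-representation on some complex Hilbert space. -/
def IsRepresentable (f : A →ₗ[ℂ] ℂ) : Prop :=
  ∃ (H : Type) (_ : NormedAddCommGroup H) (_ : InnerProductSpace ℂ H) (_ : CompleteSpace H),
    IsRepOn f H

/-- Absolute continuity `f ≪ g` for representable positive functionals: `f` is the pointwise
limit of an increasing sequence of representable positive functionals `fₙ` with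
`fₙ ≤ αₙ • g` for some positive reals `αₙ`. -/
def AbsContR (f g : A →ₗ[ℂ] ℂ) : Prop :=
  ∃ (fn : ℕ → (A →ₗ[ℂ] ℂ)) (α : ℕ → ℝ),
    (∀ n, IsRepresentable (fn n) ∧ IsPosFn (fn n)) ∧
    (∀ n, 0 < α n) ∧
    (∀ n, FnLE (fn n) (fn (n + 1))) ∧
    (∀ n, FnLE (fn n) (((α n : ℂ)) • g)) ∧
    (∀ a : A, Filter.Tendsto (fun n => fn n a) Filter.atTop (nhds (f a)))

/-- Singularity `f ⊥ g` for representable positive functionals: the only representable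
positive functional dominated by both `f` and `g` is `0`. -/
def SingularR (f g : A →ₗ[ℂ] ℂ) : Prop :=
  ∀ p : A →ₗ[ℂ] ℂ, IsRepresentable p → IsPosFn p → FnLE p f → FnLE p g → p = 0

/-- `f = fr + fs` is a Lebesgue decomposition of `f` with respect to `g` (representable
positive functionals). -/
def IsLebDecompR (f g fr fs : A →ₗ[ℂ] ℂ) : Prop :=
  IsRepresentable fr ∧ IsPosFn fr ∧ IsRepresentable fs ∧ IsPosFn fs ∧
    f = fr + fs ∧ AbsContR fr g ∧ SingularR fs g

/-- The Lebesgue decomposition of `f` with respect to `g` is unique. -/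
def LebDecompUniqueForR (f g : A →ₗ[ℂ] ℂ) : Prop :=
  ∀ fr fs fr' fs' : A →ₗ[ℂ] ℂ, IsLebDecompR f g fr fs → IsLebDecompR f g fr' fs' →
    fr = fr' ∧ fs = fs'

end StarAlgebraDefs

/-- The Lebesgue decomposition of representable positive functionals over `A` is unique. -/
def LebDecompUniqueR (A : Type) [NonUnitalRing A] [Module ℂ A] [SMulCommClass ℂ A A]
    [IsScalarTower ℂ A A] [StarRing A] [StarModule ℂ A] : Prop :=
  ∀ f g : A →ₗ[ℂ] ℂ, IsRepresentable f → IsPosFn f → IsRepresentable g → IsPosFn g →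
    LebDecompUniqueForR f g

/-! In the cyclic representation `(π, ξ)` inducing `f + g`, the representable functionals dominated
by `f + g` are the functionals `a ↦ ⟪ξ, T π(a) ξ⟫` with `0 ≤ T ≤ 1` in the commutant of `π`, and
this correspondence preserves the order. If `f` corresponds to `F`, then `g` corresponds to
`1 - F`. Let `P` be the projection onto `ker (1 - F)`. The singular part of `f` corresponds to `P`,
since a positive operator below both `P` and `1 - F` vanishes on the range of `P` and on its
complement. The regular part corresponds to `F - P`: it is the strong limit of the increasing
sequence `F - F ^ (n + 1)`, whose terms are at most `(n + 1) • (1 - F)`. It is the greatest one,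
because a positive operator dominated by a multiple of `1 - F` vanishes on `ker (1 - F)`, and if it
is also below `F` it is then below `(1 - P) F (1 - P) = F - P`. -/

open ContinuousLinearMap Filter Topology

section StarOrderedRing

variable {R : Type*} [Ring R] [StarRing R] [PartialOrder R] [StarOrderedRing R] {a b p : R}

lemma le_sub_isStarProjection_of_mul_eq_zero (hp : IsStarProjection p) (ha : 0 ≤ a)
    (hab : a ≤ b) (hap : a * p = 0) (hbp : b * p = p) : a ≤ b - p := by
  have hpa : p * a = 0 := by simpa [ha.star_eq, hp.isSelfAdjoint.star_eq] using congr(star $hap)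
  have hpb : p * b = p := by
    simpa [(ha.trans hab).star_eq, hp.isSelfAdjoint.star_eq] using congr(star $hbp)
  have hconj := hp.one_sub.isSelfAdjoint.conjugate_le_conjugate hab
  simpa [sub_mul, mul_sub, hap, hpa, hbp, hpb, hp.isIdempotentElem.eq] using hconj

end StarOrderedRing

section NonUnitalCStarAlgebra

variable {R : Type*} [NonUnitalCStarAlgebra R] [PartialOrder R] [StarOrderedRing R] {a b p : R}

lemma mul_eq_zero_of_nonneg_of_le (ha : 0 ≤ a) (hab : a ≤ b) {c : R} (hbc : b * c = 0) :
    a * c = 0 := by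
  have hconj : star c * a * c = 0 := by
    refine le_antisymm ?_ (star_left_conjugate_nonneg ha c)
    simpa [mul_assoc, hbc] using star_left_conjugate_le_conjugate hab c
  have hsqrt : CFC.sqrt a * c = 0 := by
    rw [← CStarRing.star_mul_self_eq_zero_iff, star_mul, (CFC.sqrt_nonneg a).star_eq, mul_assoc,
      ← mul_assoc (CFC.sqrt a), CFC.sqrt_mul_sqrt_self a, ← mul_assoc, hconj]
  rw [← CFC.sqrt_mul_sqrt_self a, mul_assoc, hsqrt, mul_zero]

lemma eq_zero_of_le_isStarProjection_of_mul_eq_zero (hp : IsStarProjection p) (ha : 0 ≤ a)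
    (hap : a ≤ p) (hab : a ≤ b) (hbp : b * p = 0) : a = 0 := by
  rw [← (hp.mul_right_and_mul_left_of_nonneg_of_le ha hap).1]
  exact mul_eq_zero_of_nonneg_of_le ha hab hbp

end NonUnitalCStarAlgebra

section CStarAlgebra

variable {R : Type*} [CStarAlgebra R] [PartialOrder R] [StarOrderedRing R] {a : R}

lemma antitone_pow_mul_one_sub (ha : 0 ≤ a) (ha1 : a ≤ 1) :
    Antitone fun n : ℕ => a ^ n * (1 - a) := fun m n hmn => by
  rw [← sub_nonneg, ← sub_mul]
  refine Commute.mul_nonneg (sub_nonneg.2 (CStarAlgebra.pow_antitone ha ha1 hmn))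
    (sub_nonneg.2 ha1) ?_
  exact (Commute.one_right _).sub_right
    ((Commute.pow_self a m).sub_left (Commute.pow_self a n))

lemma one_sub_pow_le_nsmul (ha : 0 ≤ a) (ha1 : a ≤ 1) (n : ℕ) : 1 - a ^ n ≤ n • (1 - a) := by
  rw [← geom_sum_mul_neg, Finset.sum_mul]
  simpa using Finset.sum_le_card_nsmul (Finset.range n) (fun k => a ^ k * (1 - a)) (1 - a)
    fun k _ => by simpa using antitone_pow_mul_one_sub ha ha1 k.zero_le

lemma norm_pow_mul_one_sub_le (ha : 0 ≤ a) (ha1 : a ≤ 1) (n : ℕ) :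
    ‖a ^ n * (1 - a)‖ ≤ 1 / (n + 1) := by
  have hnonneg : 0 ≤ a ^ n * (1 - a) :=
    Commute.mul_nonneg (CStarAlgebra.pow_nonneg ha n) (sub_nonneg.2 ha1)
      ((Commute.one_right _).sub_right (Commute.pow_self a n))
  have hle : (n + 1) • (a ^ n * (1 - a)) ≤ 1 := calc
    _ ≤ ∑ k ∈ Finset.range (n + 1), a ^ k * (1 - a) := by
      simpa using Finset.card_nsmul_le_sum (Finset.range (n + 1)) (fun k => a ^ k * (1 - a))
        (a ^ n * (1 - a)) fun k hk =>
          antitone_pow_mul_one_sub ha ha1 (Nat.le_of_lt_succ (Finset.mem_range.1 hk))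
    _ = 1 - a ^ (n + 1) := by rw [← Finset.sum_mul, geom_sum_mul_neg]
    _ ≤ 1 := sub_le_self 1 (CStarAlgebra.pow_nonneg ha _)
  have hnorm := (CStarAlgebra.norm_le_one_iff_of_nonneg _ (nsmul_nonneg hnonneg _)).2 hle
  rw [le_div_iff₀' (by positivity)]
  rwa [← Nat.cast_smul_eq_nsmul ℝ, norm_smul, Real.norm_natCast, Nat.cast_succ] at hnorm

end CStarAlgebra

section Operator

variable {H : Type*} [NormedAddCommGroup H] [InnerProductSpace ℂ H]

lemma nonneg_of_denseRange_of_inner_nonneg {ι : Type*} {e : ι → H} (he : DenseRange e)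
    {T : H →L[ℂ] H} (hT : ∀ i, 0 ≤ ⟪e i, T (e i)⟫_ℂ) : 0 ≤ T := by
  have hnonneg (x : H) : 0 ≤ ⟪T x, x⟫_ℂ := by
    rw [← inner_conj_symm]
    exact star_nonneg_iff.2 (he.induction_on x (isClosed_le continuous_const (by fun_prop)) hT)
  rw [nonneg_iff_isPositive, isPositive_iff_complex]
  intro x
  obtain ⟨hre, him⟩ := RCLike.nonneg_iff.1 (hnonneg x)
  exact ⟨RCLike.ext (by simp) (by simpa using him.symm), hre⟩

variable [CompleteSpace H]

/-- The orthogonal projection onto the space of fixed points of `F`; when `0 ≤ F ≤ 1` it is the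
strong limit of the powers of `F`. -/
noncomputable def fixedPointProj (F : H →L[ℂ] H) : H →L[ℂ] H := (1 - F).ker.starProjection

variable {F : H →L[ℂ] H}

lemma isStarProjection_fixedPointProj (F : H →L[ℂ] H) : IsStarProjection (fixedPointProj F) :=
  isStarProjection_starProjection

lemma mul_fixedPointProj (F : H →L[ℂ] H) : F * fixedPointProj F = fixedPointProj F := by
  ext x
  have hx : (1 - F) (fixedPointProj F x) = 0 :=
    Submodule.starProjection_apply_mem (1 - F).ker x
  exact (sub_eq_zero.1 hx).symm

lemma tendsto_pow_apply_of_mem_orthogonal_ker (hF : 0 ≤ F) (hF1 : F ≤ 1) {x : H}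
    (hx : x ∈ (1 - F).kerᗮ) : Tendsto (fun n : ℕ => (F ^ n) x) atTop (𝓝 0) := by
  have hnorm (n : ℕ) : ‖F ^ n‖₊ ≤ 1 :=
    (CStarAlgebra.norm_le_one_iff_of_nonneg _ (CStarAlgebra.pow_nonneg hF n)).2
      (by simpa using CStarAlgebra.pow_antitone hF hF1 n.zero_le)
  have hclosed : IsClosed {x : H | Tendsto (fun n : ℕ => (F ^ n) x) atTop (𝓝 0)} :=
    (LipschitzWith.uniformEquicontinuous (fun n : ℕ => ⇑(F ^ n)) 1
      fun n => (F ^ n).lipschitz.weaken (hnorm n)).equicontinuous.isClosed_setOfPred_tendsto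
        continuous_const
  have hrange : x ∈ closure (Set.range (1 - F : H →L[ℂ] H)) := by
    rw [orthogonal_ker, (sub_nonneg.2 hF1).isSelfAdjoint.adjoint_eq] at hx
    exact hx
  refine closure_minimal (Set.range_subset_iff.2 fun y => ?_) hclosed hrange
  change Tendsto (fun n : ℕ => (F ^ n * (1 - F)) y) atTop (𝓝 0)
  refine squeeze_zero_norm (fun n => (F ^ n * (1 - F)).le_of_opNorm_le
    (norm_pow_mul_one_sub_le hF hF1 n) y) ?_
  simpa using tendsto_one_div_add_atTop_nhds_zero_nat.mul_const ‖y‖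

lemma tendsto_pow_apply_fixedPointProj (hF : 0 ≤ F) (hF1 : F ≤ 1) (x : H) :
    Tendsto (fun n : ℕ => (F ^ n) x) atTop (𝓝 (fixedPointProj F x)) := by
  have hfix (n : ℕ) : F ^ n * fixedPointProj F = fixedPointProj F := by
    induction n with
    | zero => rw [pow_zero, one_mul]
    | succ n ih => rw [pow_succ, mul_assoc, mul_fixedPointProj, ih]
  have hlim : Tendsto (fun n : ℕ => (F ^ n) (x - fixedPointProj F x)) atTop (𝓝 0) :=
    tendsto_pow_apply_of_mem_orthogonal_ker hF hF1
      (Submodule.sub_starProjection_mem_orthogonal x)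
  have hsplit (n : ℕ) : (F ^ n) (x - fixedPointProj F x) + fixedPointProj F x = (F ^ n) x := by
    rw [map_sub, ← mul_apply_eq_comp, hfix, sub_add_cancel]
  simpa only [hsplit, zero_add] using hlim.add_const (fixedPointProj F x)

lemma commute_fixedPointProj (hF : 0 ≤ F) (hF1 : F ≤ 1) {S : H →L[ℂ] H} (h : Commute F S) :
    Commute (fixedPointProj F) S := by
  ext x
  refine tendsto_nhds_unique (tendsto_pow_apply_fixedPointProj hF hF1 (S x)) ?_
  refine ((S.continuous.tendsto _).comp (tendsto_pow_apply_fixedPointProj hF hF1 x)).congr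
    fun n => ?_
  exact congr($((h.pow_left n).symm.eq) x)

end Operator

section Representation

variable {A H : Type*} [NonUnitalRing A] [Module ℂ A] [StarRing A]
  [NormedAddCommGroup H] [InnerProductSpace ℂ H] [CompleteSpace H]
  {π : A →⋆ₙₐ[ℂ] (H →L[ℂ] H)} {T : H →L[ℂ] H}

lemma map_mul_apply (π : A →⋆ₙₐ[ℂ] (H →L[ℂ] H)) (a b : A) (x : H) :
    π (a * b) x = π a (π b x) := by
  rw [map_mul, mul_apply_eq_comp]

lemma inner_map_star_apply (π : A →⋆ₙₐ[ℂ] (H →L[ℂ] H)) (a : A) (x y : H) :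
    ⟪x, π (star a) y⟫_ℂ = ⟪π a x, y⟫_ℂ := by
  rw [map_star, star_eq_adjoint, adjoint_inner_right]

/-- The commutant of a representation `π`: the operators commuting with every `π a`. -/
noncomputable def commutant (π : A →⋆ₙₐ[ℂ] (H →L[ℂ] H)) : StarSubalgebra ℂ (H →L[ℂ] H) :=
  StarSubalgebra.centralizer ℂ (Set.range π)

lemma mem_commutant_iff : T ∈ commutant π ↔ ∀ a, Commute T (π a) := by
  rw [commutant, StarSubalgebra.mem_centralizer_iff, Set.forall_mem_range]
  exact ⟨fun h a => (h a).1.symm, fun h a => ⟨(h a).eq.symm, map_star π a ▸ (h (star a)).eq.symm⟩⟩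

lemma apply_map_of_mem_commutant (hT : T ∈ commutant π) (a : A) (x : H) :
    T (π a x) = π a (T x) :=
  congr($((mem_commutant_iff.1 hT a).eq) x)

lemma sqrt_mem_commutant (hT : T ∈ commutant π) : CFC.sqrt T ∈ commutant π := by
  rw [mem_commutant_iff, CFC.sqrt_eq_cfc]
  exact fun a => (mem_commutant_iff.1 hT a).cfc_nnreal _

lemma fixedPointProj_mem_commutant (hT : T ∈ commutant π) (hT0 : 0 ≤ T) (hT1 : T ≤ 1) :
    fixedPointProj T ∈ commutant π :=
  mem_commutant_iff.2 fun a => commute_fixedPointProj hT0 hT1 (mem_commutant_iff.1 hT a)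

/-- The map `a ↦ π(a)η` from the algebra to the orbit of the vector `η`. -/
noncomputable def orbitMap (π : A →⋆ₙₐ[ℂ] (H →L[ℂ] H)) (η : H) : A →ₗ[ℂ] H where
  toFun a := π a η
  map_add' a b := by simp
  map_smul' c a := by simp

/-- The cyclic subspace generated by `η`, that is the closure of `π(A)η`. It need not contain `η`,
since the representation may be degenerate. -/
noncomputable abbrev cyclicSubspace (π : A →⋆ₙₐ[ℂ] (H →L[ℂ] H)) (η : H) : Submodule ℂ H :=
  (orbitMap π η).range.topologicalClosure

lemma map_apply_mem_cyclicSubspace (a : A) (η : H) : π a η ∈ cyclicSubspace π η :=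
  Submodule.le_topologicalClosure _ ⟨a, rfl⟩

lemma map_apply_mem_cyclicSubspace_of_mem (a : A) {η x : H} (hx : x ∈ cyclicSubspace π η) :
    π a x ∈ cyclicSubspace π η := by
  have hmaps : Set.MapsTo (π a) ((orbitMap π η).range : Set H) (orbitMap π η).range := by
    rintro _ ⟨b, rfl⟩
    exact ⟨a * b, map_mul_apply π a b η⟩
  exact hmaps.closure (π a).continuous hx

lemma map_starProjection_cyclicSubspace (a : A) (η : H) :
    π a ((cyclicSubspace π η).starProjection η) = π a η := by
  set ζ := (cyclicSubspace π η).starProjection η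
  have hmem : π a (η - ζ) ∈ cyclicSubspace π η := by
    rw [map_sub]
    exact sub_mem (map_apply_mem_cyclicSubspace a η)
      (map_apply_mem_cyclicSubspace_of_mem a (Submodule.starProjection_apply_mem _ η))
  have horth : ⟪π a (η - ζ), π a (η - ζ)⟫_ℂ = 0 := by
    rw [← inner_map_star_apply]
    exact Submodule.inner_left_of_mem_orthogonal (map_apply_mem_cyclicSubspace_of_mem _ hmem)
      (Submodule.sub_starProjection_mem_orthogonal η)
  rw [inner_self_eq_zero, map_sub, sub_eq_zero] at horth
  exact horth.symm

/-- The restriction of a representation to an invariant closed subspace. -/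
noncomputable def restrictRep (π : A →⋆ₙₐ[ℂ] (H →L[ℂ] H)) (N : Submodule ℂ H) [CompleteSpace N]
    (hN : ∀ a, ∀ x ∈ N, π a x ∈ N) : A →⋆ₙₐ[ℂ] (N →L[ℂ] N) where
  toFun a := (π a).restrict (hN a)
  map_smul' c a := by ext x; simp
  map_zero' := by ext x; simp
  map_add' a b := by ext x; simp
  map_mul' a b := by ext x; simp
  map_star' a := by
    rw [star_eq_adjoint, eq_adjoint_iff]
    intro x y
    simp only [Submodule.coe_inner, coe_restrict_apply]
    rw [← inner_map_star_apply, star_star]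

variable {K : Type*} [NormedAddCommGroup K] [InnerProductSpace ℂ K] [CompleteSpace K]
  {ρ : A →⋆ₙₐ[ℂ] (K →L[ℂ] K)}

/-- The direct sum of two representations, acting on the Hilbert sum `H ⊕ K`. -/
noncomputable def directSumRep (π : A →⋆ₙₐ[ℂ] (H →L[ℂ] H))
    (ρ : A →⋆ₙₐ[ℂ] (K →L[ℂ] K)) : A →⋆ₙₐ[ℂ] (WithLp 2 (H × K) →L[ℂ] WithLp 2 (H × K)) where
  toFun a := (WithLp.prodContinuousLinearEquiv 2 ℂ H K).symm.toContinuousLinearMap ∘L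
    (π a).prodMap (ρ a) ∘L (WithLp.prodContinuousLinearEquiv 2 ℂ H K).toContinuousLinearMap
  map_smul' c a := by ext x; simp [Prod.map, ← WithLp.toLp_smul]
  map_zero' := by ext x; simp [Prod.map]
  map_add' a b := by ext x; simp [Prod.map, ← WithLp.toLp_add]
  map_mul' a b := by ext x; simp [Prod.map]
  map_star' a := by
    rw [star_eq_adjoint, eq_adjoint_iff]
    intro x y
    simp [← inner_map_star_apply]

lemma exists_intertwiner_of_norm_le {ξ : H} {η : K} (hξ : DenseRange fun a => π a ξ)
    (hη : DenseRange fun a => ρ a η) {C : ℝ} (hC : ∀ a, ‖ρ a η‖ ≤ C * ‖π a ξ‖) :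
    ∃ V : H →L[ℂ] K, (∀ a x, V (π a x) = ρ a (V x)) ∧ V ξ = η := by
  let V : H →L[ℂ] K := (orbitMap ρ η).extendOfNorm (orbitMap π ξ)
  have hV (a : A) : V (π a ξ) = ρ a η := LinearMap.extendOfNorm_eq hξ ⟨C, hC⟩ a
  have hinter (a : A) (x : H) : V (π a x) = ρ a (V x) := by
    refine hξ.induction_on x (isClosed_eq (by fun_prop) (by fun_prop)) fun b => ?_
    rw [← map_mul_apply, hV, hV, map_mul_apply]
  refine ⟨V, hinter, ?_⟩
  have horth (y : K) : ⟪y, V ξ - η⟫_ℂ = 0 := by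
    refine hη.induction_on y (isClosed_eq (by fun_prop) (by fun_prop)) fun b => ?_
    rw [← inner_map_star_apply, map_sub, ← hinter, hV, sub_self, inner_zero_right]
  exact sub_eq_zero.1 (inner_self_eq_zero.1 (horth _))

lemma adjoint_comp_self_mem_commutant {V : H →L[ℂ] K} (hV : ∀ a x, V (π a x) = ρ a (V x)) :
    V.adjoint ∘L V ∈ commutant π := by
  refine mem_commutant_iff.2 fun a => ContinuousLinearMap.ext fun x => ext_inner_left ℂ fun y => ?_
  calc ⟪y, V.adjoint (V (π a x))⟫_ℂ
    _ = ⟪V (π (star a) y), V x⟫_ℂ := by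
      rw [adjoint_inner_right, hV, hV, ← inner_map_star_apply, star_star]
    _ = ⟪y, π a (V.adjoint (V x))⟫_ℂ := by
      rw [← adjoint_inner_right, ← inner_map_star_apply, star_star]

end Representation

section PositiveFunctional

variable {A : Type} [NonUnitalRing A] [Module ℂ A] [StarRing A] {f f₀ g p q r : A →ₗ[ℂ] ℂ}

lemma fnLE_iff : FnLE p q ↔ ∀ a, p (star a * a) ≤ q (star a * a) := by
  simp [FnLE, IsPosFn, sub_nonneg]

lemma FnLE.trans (hpq : FnLE p q) (hqr : FnLE q r) : FnLE p r :=
  fnLE_iff.2 fun a => (fnLE_iff.1 hpq a).trans (fnLE_iff.1 hqr a)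

lemma AbsContR.fnLE_of_forall (hf₀g : AbsContR f₀ g) (hf₀f : FnLE f₀ f)
    (hr : ∀ p, IsRepresentable p → FnLE p f → ∀ α : ℝ, FnLE p ((α : ℂ) • g) → FnLE p r) :
    FnLE f₀ r := by
  obtain ⟨u, α, hu, -, hmono, hug, hlim⟩ := hf₀g
  have huf₀ (n : ℕ) : FnLE (u n) f₀ := fnLE_iff.2 fun a =>
    (monotone_nat_of_le_succ fun m => fnLE_iff.1 (hmono m) a).ge_of_tendsto (hlim _) n
  have hur (n : ℕ) : FnLE (u n) r := hr (u n) (hu n).1 ((huf₀ n).trans hf₀f) (α n) (hug n)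
  exact fnLE_iff.2 fun a => le_of_tendsto' (hlim _) fun n => fnLE_iff.1 (hur n) a

lemma isRepresentable_of_forall_eq_inner {H : Type} [NormedAddCommGroup H] [InnerProductSpace ℂ H]
    [CompleteSpace H] {π : A →⋆ₙₐ[ℂ] (H →L[ℂ] H)} {η : H} (hf : ∀ a, f a = ⟪η, π a η⟫_ℂ) :
    IsRepresentable f := by
  let N := cyclicSubspace π η
  let ζ : N := ⟨N.starProjection η, Submodule.starProjection_apply_mem N η⟩
  let πN := restrictRep π N fun a _ => map_apply_mem_cyclicSubspace_of_mem a
  have hζ (a : A) : (πN a ζ : H) = π a η := map_starProjection_cyclicSubspace a η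
  refine ⟨N, inferInstance, inferInstance, inferInstance, πN, ζ, fun x => ?_, fun a => ?_⟩
  · rw [closure_subtype, ← Set.range_comp, Function.comp_def]
    simp only [hζ]
    exact x.2
  · rw [hf, Submodule.coe_inner, hζ, Submodule.inner_starProjection_left_eq_right,
      Submodule.starProjection_eq_self_iff.2 (map_apply_mem_cyclicSubspace a η)]

lemma IsRepresentable.add (hf : IsRepresentable f) (hg : IsRepresentable g) :
    IsRepresentable (f + g) := by
  obtain ⟨H, _, _, _, π, ξ, -, hf⟩ := hf
  obtain ⟨K, _, _, _, ρ, η, -, hg⟩ := hg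
  refine isRepresentable_of_forall_eq_inner (π := directSumRep π ρ) (η := WithLp.toLp 2 (ξ, η))
    fun a => ?_
  rw [LinearMap.add_apply, hf, hg, WithLp.prod_inner_apply]
  rfl

end PositiveFunctional

section OperatorFunctional

variable {A H : Type} [NonUnitalRing A] [Module ℂ A] [StarRing A]
  [NormedAddCommGroup H] [InnerProductSpace ℂ H] [CompleteSpace H]
  {π : A →⋆ₙₐ[ℂ] (H →L[ℂ] H)} {ξ : H} {F P S T : H →L[ℂ] H} {f₀ p : A →ₗ[ℂ] ℂ}

/-- The functional `a ↦ ⟪ξ, T π(a) ξ⟫` attached to an operator `T`, as a linear function of `T`. -/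
noncomputable def opFunctional (π : A →⋆ₙₐ[ℂ] (H →L[ℂ] H)) (ξ : H) :
    (H →L[ℂ] H) →ₗ[ℂ] A →ₗ[ℂ] ℂ :=
  LinearMap.mk₂ ℂ (fun T a => ⟪ξ, T (π a ξ)⟫_ℂ) (by simp) (by simp) (by simp) (by simp)

lemma opFunctional_apply (a : A) : opFunctional π ξ T a = ⟪ξ, T (π a ξ)⟫_ℂ := rfl

lemma opFunctional_star_mul_self (hT : T ∈ commutant π) (a : A) :
    opFunctional π ξ T (star a * a) = ⟪π a ξ, T (π a ξ)⟫_ℂ := by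
  rw [opFunctional_apply, map_mul_apply, apply_map_of_mem_commutant hT, inner_map_star_apply]

lemma isPosFn_opFunctional (hT : T ∈ commutant π) (hT0 : 0 ≤ T) :
    IsPosFn (opFunctional π ξ T) := fun a => by
  rw [opFunctional_star_mul_self hT]
  exact ((nonneg_iff_isPositive T).1 hT0).inner_nonneg_right _

lemma isRepresentable_opFunctional (hT : T ∈ commutant π) (hT0 : 0 ≤ T) :
    IsRepresentable (opFunctional π ξ T) := by
  refine isRepresentable_of_forall_eq_inner (π := π) (η := CFC.sqrt T ξ) fun a => ?_
  have hadj : (CFC.sqrt T).adjoint = CFC.sqrt T := (CFC.sqrt_nonneg T).isSelfAdjoint.adjoint_eq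
  rw [← apply_map_of_mem_commutant (sqrt_mem_commutant hT), ← adjoint_inner_right, hadj,
    ← mul_apply_eq_comp, CFC.sqrt_mul_sqrt_self T, opFunctional_apply]

lemma fnLE_opFunctional_of_le (hS : S ∈ commutant π) (hT : T ∈ commutant π) (hST : S ≤ T) :
    FnLE (opFunctional π ξ S) (opFunctional π ξ T) := by
  rw [FnLE, ← map_sub]
  exact isPosFn_opFunctional (sub_mem hT hS) (sub_nonneg.2 hST)

lemma le_of_fnLE_opFunctional (hξ : DenseRange fun a => π a ξ) (hS : S ∈ commutant π)
    (hT : T ∈ commutant π) (hST : FnLE (opFunctional π ξ S) (opFunctional π ξ T)) : S ≤ T := by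
  rw [FnLE, ← map_sub] at hST
  refine sub_nonneg.1 (nonneg_of_denseRange_of_inner_nonneg hξ fun a => ?_)
  exact (hST a).trans_eq (opFunctional_star_mul_self (sub_mem hT hS) a)

lemma norm_map_apply_le_of_fnLE_opFunctional {K : Type*} [NormedAddCommGroup K]
    [InnerProductSpace ℂ K] [CompleteSpace K] {ρ : A →⋆ₙₐ[ℂ] (K →L[ℂ] K)} {η : K}
    (hp : ∀ a, p a = ⟪η, ρ a η⟫_ℂ) (hS : S ∈ commutant π) (hpS : FnLE p (opFunctional π ξ S))
    (a : A) : ‖ρ a η‖ ≤ √‖S‖ * ‖π a ξ‖ := by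
  have hle : ⟪ρ a η, ρ a η⟫_ℂ ≤ ⟪π a ξ, S (π a ξ)⟫_ℂ := by
    rw [← inner_map_star_apply, ← map_mul_apply, ← hp, ← opFunctional_star_mul_self hS]
    exact fnLE_iff.1 hpS a
  refine le_of_sq_le_sq ?_ (by positivity)
  calc ‖ρ a η‖ ^ 2
    _ = RCLike.re ⟪ρ a η, ρ a η⟫_ℂ := (inner_self_eq_norm_sq _).symm
    _ ≤ RCLike.re ⟪π a ξ, S (π a ξ)⟫_ℂ := (RCLike.le_iff_re_im.1 hle).1
    _ ≤ ‖π a ξ‖ * ‖S (π a ξ)‖ := re_inner_le_norm _ _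
    _ ≤ ‖π a ξ‖ * (‖S‖ * ‖π a ξ‖) := by gcongr; exact S.le_opNorm _
    _ = (√‖S‖ * ‖π a ξ‖) ^ 2 := by rw [mul_pow, Real.sq_sqrt (norm_nonneg S)]; ring

-- Radon–Nikodym: the density is `V† V`, where `V` intertwines `π` with the cyclic representation
-- inducing `p`.
lemma exists_opFunctional_eq_of_fnLE (hξ : DenseRange fun a => π a ξ) (hS : S ∈ commutant π)
    (hp : IsRepresentable p) (hpS : FnLE p (opFunctional π ξ S)) :
    ∃ T ∈ commutant π, 0 ≤ T ∧ T ≤ S ∧ opFunctional π ξ T = p := by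
  obtain ⟨K, _, _, _, ρ, η, hη, hp⟩ := hp
  obtain ⟨V, hV, rfl⟩ := exists_intertwiner_of_norm_le hξ hη
    (norm_map_apply_le_of_fnLE_opFunctional hp hS hpS)
  have hT : V.adjoint ∘L V ∈ commutant π := adjoint_comp_self_mem_commutant hV
  have hpT : opFunctional π ξ (V.adjoint ∘L V) = p := LinearMap.ext fun a => by
    rw [hp, ← hV, ← adjoint_inner_right, opFunctional_apply, comp_apply]
  exact ⟨_, hT, (nonneg_iff_isPositive _).2 (isPositive_adjoint_comp_self V),
    le_of_fnLE_opFunctional hξ hT hS (hpT ▸ hpS), hpT⟩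

lemma singularR_opFunctional (hξ : DenseRange fun a => π a ξ) (hP : P ∈ commutant π)
    (hP_proj : IsStarProjection P) (hS : S ∈ commutant π) (hSP : S * P = 0) :
    SingularR (opFunctional π ξ P) (opFunctional π ξ S) := by
  intro p hp _ hpP hpS
  obtain ⟨T, hT, hT0, hTP, rfl⟩ := exists_opFunctional_eq_of_fnLE hξ hP hp hpP
  have hTS : T ≤ S := le_of_fnLE_opFunctional hξ hT hS hpS
  rw [eq_zero_of_le_isStarProjection_of_mul_eq_zero hP_proj hT0 hTP hTS hSP, map_zero]

lemma absContR_opFunctional_sub_fixedPointProj (hFπ : F ∈ commutant π) (hF : 0 ≤ F)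
    (hF1 : F ≤ 1) :
    AbsContR (opFunctional π ξ (F - fixedPointProj F)) (opFunctional π ξ (1 - F)) := by
  have hmem (n : ℕ) : F - F ^ (n + 1) ∈ commutant π := sub_mem hFπ (pow_mem hFπ _)
  have hanti : Antitone fun n : ℕ => F ^ n := CStarAlgebra.pow_antitone hF hF1
  have hnonneg (n : ℕ) : 0 ≤ F - F ^ (n + 1) :=
    sub_nonneg.2 (by simpa using hanti (Nat.le_add_left 1 n))
  have hbound (n : ℕ) : F - F ^ (n + 1) ≤ ((n + 1 : ℝ) : ℂ) • (1 - F) := calc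
    F - F ^ (n + 1) ≤ 1 - F ^ (n + 1) := sub_le_sub_right hF1 _
    _ ≤ (n + 1) • (1 - F) := one_sub_pow_le_nsmul hF hF1 (n + 1)
    _ = ((n + 1 : ℝ) : ℂ) • (1 - F) := by rw [← Nat.cast_smul_eq_nsmul ℂ]; simp
  refine ⟨fun n => opFunctional π ξ (F - F ^ (n + 1)), fun n => n + 1, fun n =>
    ⟨isRepresentable_opFunctional (hmem n) (hnonneg n), isPosFn_opFunctional (hmem n) (hnonneg n)⟩,
    fun n => by positivity, fun n => ?_, fun n => ?_, fun a => ?_⟩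
  · exact fnLE_opFunctional_of_le (hmem n) (hmem (n + 1))
      (sub_le_sub_left (hanti (n + 1).le_succ) F)
  · rw [← map_smul]
    exact fnLE_opFunctional_of_le (hmem n)
      ((commutant π).smul_mem (sub_mem (one_mem _) hFπ) _) (hbound n)
  · exact tendsto_const_nhds.inner (tendsto_const_nhds.sub
      ((tendsto_pow_apply_fixedPointProj hF hF1 (π a ξ)).comp (tendsto_add_atTop_nat 1)))

lemma fnLE_opFunctional_sub_fixedPointProj (hξ : DenseRange fun a => π a ξ)
    (hFπ : F ∈ commutant π) (hF : 0 ≤ F) (hF1 : F ≤ 1)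
    (hf₀g : AbsContR f₀ (opFunctional π ξ (1 - F))) (hf₀f : FnLE f₀ (opFunctional π ξ F)) :
    FnLE f₀ (opFunctional π ξ (F - fixedPointProj F)) := by
  refine hf₀g.fnLE_of_forall hf₀f fun p hp hpF α hpα => ?_
  obtain ⟨S, hS, hS0, hSF, rfl⟩ := exists_opFunctional_eq_of_fnLE hξ hFπ hp hpF
  have hSα : S ≤ (α : ℂ) • (1 - F) := by
    rw [← map_smul] at hpα
    exact le_of_fnLE_opFunctional hξ hS ((commutant π).smul_mem (sub_mem (one_mem _) hFπ) _) hpα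
  have hSP : S * fixedPointProj F = 0 := mul_eq_zero_of_nonneg_of_le hS0 hSα (by
    rw [smul_mul_assoc, sub_mul, one_mul, mul_fixedPointProj, sub_self, smul_zero])
  exact fnLE_opFunctional_of_le hS (sub_mem hFπ (fixedPointProj_mem_commutant hFπ hF hF1))
    (le_sub_isStarProjection_of_mul_eq_zero (isStarProjection_fixedPointProj F) hS0 hSF hSP
      (mul_fixedPointProj F))

end OperatorFunctional

/-- **Lebesgue decomposition of representable positive functionals** (Theorem 1.4).
For representable positive functionals `f, g` on a `⋆`-algebra `A`, there is a greatest
representable positive functional `fr ≤ f` absolutely continuous with respect to `g`, and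
`f - fr` is a representable positive functional singular to `g` and to `fr`. -/
theorem lebesgue_decomposition_exists
    {A : Type} [NonUnitalRing A] [Module ℂ A] [SMulCommClass ℂ A A]
    [IsScalarTower ℂ A A] [StarRing A] [StarModule ℂ A]
    (f g : A →ₗ[ℂ] ℂ) (hfR : IsRepresentable f) (hfP : IsPosFn f)
    (hgR : IsRepresentable g) (hgP : IsPosFn g) :
    ∃ fr : A →ₗ[ℂ] ℂ,
      IsRepresentable fr ∧ IsPosFn fr ∧ FnLE fr f ∧ AbsContR fr g ∧
      (∀ f0 : A →ₗ[ℂ] ℂ, IsRepresentable f0 → IsPosFn f0 → FnLE f0 f → AbsContR f0 g →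
        FnLE f0 fr) ∧
      IsRepresentable (f - fr) ∧ IsPosFn (f - fr) ∧
      SingularR (f - fr) g ∧ SingularR (f - fr) fr := by
  obtain ⟨H, _, _, _, π, ξ, hξ, hfg⟩ := hfR.add hgR
  replace hfg : f + g = opFunctional π ξ 1 := LinearMap.ext hfg
  have hfle : FnLE f (opFunctional π ξ 1) := by rwa [FnLE, ← hfg, add_sub_cancel_left]
  obtain ⟨F, hFπ, hF, hF1, rfl⟩ := exists_opFunctional_eq_of_fnLE hξ (one_mem _) hfR hfle
  obtain rfl : g = opFunctional π ξ (1 - F) := by rw [map_sub, ← hfg, add_sub_cancel_left]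
  set P := fixedPointProj F
  have hP : IsStarProjection P := isStarProjection_fixedPointProj F
  have hFP : F * P = P := mul_fixedPointProj F
  have hPπ : P ∈ commutant π := fixedPointProj_mem_commutant hFπ hF hF1
  have hQπ : F - P ∈ commutant π := sub_mem hFπ hPπ
  have hQ : 0 ≤ F - P :=
    le_sub_isStarProjection_of_mul_eq_zero hP le_rfl hF (zero_mul P) hFP
  have hfs : opFunctional π ξ F - opFunctional π ξ (F - P) = opFunctional π ξ P := by
    rw [← map_sub, sub_sub_cancel]
  refine ⟨opFunctional π ξ (F - P), isRepresentable_opFunctional hQπ hQ,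
    isPosFn_opFunctional hQπ hQ, fnLE_opFunctional_of_le hQπ hFπ (sub_le_self F hP.nonneg),
    absContR_opFunctional_sub_fixedPointProj hFπ hF hF1, fun f₀ _ _ hf₀f hf₀g =>
      fnLE_opFunctional_sub_fixedPointProj hξ hFπ hF hF1 hf₀g hf₀f, ?_⟩
  rw [hfs]
  exact ⟨isRepresentable_opFunctional hPπ hP.nonneg, isPosFn_opFunctional hPπ hP.nonneg,
    singularR_opFunctional hξ hPπ hP (sub_mem (one_mem _) hFπ) (by simp [sub_mul, hFP]),
    singularR_opFunctional hξ hPπ hP hQπ (by simp [sub_mul, hFP, hP.isIdempotentElem.eq])⟩
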